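/- Assume RA and MON (D₁ ≥ D₀ almost surely), with Y₁₁, Y₁₀, Y₀₁, Y₀₀ integrable. Then the intent-to-treat effect decomposes as: E[Y | Z=1] − E[Y | Z=0] = E[(Y₁₁ − Y₁₀)·1{T=a}] + E[(Y₀₁ − Y₀₀)·1{T=n}] + E[(Y₁₁ − Y₀₀)·1{T=c}]. Consequently, if p_a > 0, p_n > 0 and p_c > 0, then E[Y | Z=1] − E[Y | Z=0] = p_a·E[Y₁₁ − Y₁₀ | T=a] + p_n·E[Y₀₁ − Y₀₀ | T=n] + p_c·E[Y₁₁ − Y₀₀ | T=c], where p_a + p_n + p_c = 1, i.e. the intent-to-treat effect is a convex combination of these three effects. -/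

import Mathlib

open MeasureTheory ProbabilityTheory

/-- Conditional probability `P(s | t)` as a real number. -/
noncomputable def pr {Ω : Type*} [MeasurableSpace Ω] (P : Measure Ω) (t s : Set Ω) : ℝ :=
  ((P[|t]) s).toReal

/-- Conditional expectation `E[f | t]` as a real number. -/
noncomputable def ce {Ω : Type*} [MeasurableSpace Ω] (P : Measure Ω) (t : Set Ω) (f : Ω → ℝ) : ℝ :=
  ∫ ω, f ω ∂(P[|t])

/-- Always-takers. -/
def typeA {Ω : Type*} (D0 D1 : Ω → ℝ) : Set Ω := {ω | D0 ω = 1 ∧ D1 ω = 1}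
/-- Never-takers. -/
def typeN {Ω : Type*} (D0 D1 : Ω → ℝ) : Set Ω := {ω | D0 ω = 0 ∧ D1 ω = 0}
/-- Compliers. -/
def typeC {Ω : Type*} (D0 D1 : Ω → ℝ) : Set Ω := {ω | D0 ω = 0 ∧ D1 ω = 1}
/-- Defiers. -/
def typeDF {Ω : Type*} (D0 D1 : Ω → ℝ) : Set Ω := {ω | D0 ω = 1 ∧ D1 ω = 0}

/-!
Under a fixed instrument value `z` a unit shows the outcome `Y_{D_z z}`. Random assignment turns the
two conditional means of the observed outcome into the unconditional means of `Y_{D_1 1}` and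
`Y_{D_0 0}`, so the intent-to-treat effect is the mean of `Y_{D_1 1} - Y_{D_0 0}`. On each of the
four types this difference is a single contrast of potential outcomes, and monotonicity makes the
defiers negligible.
-/

section Conditioning

variable {Ω 𝓧 ι E : Type*} [MeasurableSpace Ω] [MeasurableSpace 𝓧] [MeasurableSpace ι]
  [NormedAddCommGroup E] [NormedSpace ℝ E] {P : Measure Ω}

theorem integral_cond_eq_setAverage (s : Set Ω) (f : Ω → E) :
    ∫ ω, f ω ∂(P[|s]) = ⨍ ω in s, f ω ∂P :=
  (setAverage_eq' P f s).symm

theorem toReal_measure_mul_ce [IsFiniteMeasure P] (s : Set Ω) (f : Ω → ℝ) :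
    (P s).toReal * ce P s f = ∫ ω in s, f ω ∂P := by
  rw [ce, integral_cond_eq_setAverage]
  exact measure_smul_setAverage f (measure_ne_top P s)

theorem integral_comp_cond_preimage_of_indepFun [IsFiniteMeasure P] {X : Ω → 𝓧} {Z : Ω → ι}
    {f : 𝓧 → E} {s : Set ι} (hXZ : IndepFun X Z P) (hX : AEMeasurable X P) (hZ : Measurable Z)
    (hf : AEStronglyMeasurable f (P.map X)) (hs : MeasurableSet s) (hPs : P (Z ⁻¹' s) ≠ 0) :
    ∫ ω, f (X ω) ∂(P[|Z ⁻¹' s]) = ∫ ω, f (X ω) ∂P := by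
  have hfactor : ∫ ω in Z ⁻¹' s, f (X ω) ∂P = P.real (Z ⁻¹' s) • ∫ ω, f (X ω) ∂P :=
    Indep.setIntegral_eq_smul hZ.comap_le hXZ.symm hX ⟨s, hs, rfl⟩ hf
  have hPs' : P.real (Z ⁻¹' s) ≠ 0 := ENNReal.toReal_ne_zero.2 ⟨hPs, measure_ne_top P _⟩
  rw [integral_cond_eq_setAverage, setAverage_eq, hfactor, inv_smul_smul₀ hPs']

theorem ce_eq_integral_of_indepFun [MeasurableSingletonClass ι] [IsFiniteMeasure P]
    {Y W : Ω → ℝ} {Z : Ω → ι} {z : ι} (hWZ : IndepFun W Z P) (hW : AEMeasurable W P)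
    (hZ : Measurable Z) (hz : P {ω | Z ω = z} ≠ 0) (hYW : ∀ ω, Z ω = z → Y ω = W ω) :
    ce P {ω | Z ω = z} Y = ∫ ω, W ω ∂P := by
  have hs : MeasurableSet {ω | Z ω = z} := hZ (measurableSet_singleton z)
  calc ce P {ω | Z ω = z} Y
      = ∫ ω, W ω ∂(P[|{ω | Z ω = z}]) := integral_congr_ae (ae_cond_of_forall_mem hs hYW)
    _ = ∫ ω, W ω ∂P :=
        integral_comp_cond_preimage_of_indepFun (f := id) hWZ hW hZ
          aestronglyMeasurable_id (measurableSet_singleton z) hz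

theorem measure_setOf_eq_zero_ne_zero [IsProbabilityMeasure P] {Z : Ω → ℝ} (hZ : Measurable Z)
    (hZb : ∀ ω, Z ω = 0 ∨ Z ω = 1) (hlt : P {ω | Z ω = 1} < 1) : P {ω | Z ω = 0} ≠ 0 := by
  have hcompl : {ω | Z ω = 0} = {ω | Z ω = 1}ᶜ := by
    ext ω; rcases hZb ω with h | h <;> simp [h]
  rw [hcompl]
  exact (prob_compl_eq_zero_iff (hZ (measurableSet_singleton 1))).not.2 hlt.ne

end Conditioning

section Types

variable {Ω E : Type*} [MeasurableSpace Ω] [NormedAddCommGroup E] [NormedSpace ℝ E]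
  {P : Measure Ω} {D0 D1 : Ω → ℝ}

theorem measurableSet_typeA (hD0 : Measurable D0) (hD1 : Measurable D1) :
    MeasurableSet (typeA D0 D1) :=
  (hD0 (measurableSet_singleton 1)).inter (hD1 (measurableSet_singleton 1))

theorem measurableSet_typeN (hD0 : Measurable D0) (hD1 : Measurable D1) :
    MeasurableSet (typeN D0 D1) :=
  (hD0 (measurableSet_singleton 0)).inter (hD1 (measurableSet_singleton 0))

theorem measurableSet_typeC (hD0 : Measurable D0) (hD1 : Measurable D1) :
    MeasurableSet (typeC D0 D1) :=
  (hD0 (measurableSet_singleton 0)).inter (hD1 (measurableSet_singleton 1))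

theorem measurableSet_typeDF (hD0 : Measurable D0) (hD1 : Measurable D1) :
    MeasurableSet (typeDF D0 D1) :=
  (hD0 (measurableSet_singleton 1)).inter (hD1 (measurableSet_singleton 0))

theorem measure_typeDF_eq_zero (hle : ∀ᵐ ω ∂P, D0 ω ≤ D1 ω) : P (typeDF D0 D1) = 0 := by
  refine measure_mono_null ?_ (ae_iff.1 hle)
  rintro ω ⟨h0, h1⟩
  simp [h0, h1]

theorem integral_eq_sum_setIntegral_types {f : Ω → E} (hD0 : Measurable D0) (hD1 : Measurable D1)
    (hD0b : ∀ ω, D0 ω = 0 ∨ D0 ω = 1) (hD1b : ∀ ω, D1 ω = 0 ∨ D1 ω = 1) (hf : Integrable f P) :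
    ∫ ω, f ω ∂P = (∫ ω in typeA D0 D1, f ω ∂P) + (∫ ω in typeN D0 D1, f ω ∂P)
      + (∫ ω in typeC D0 D1, f ω ∂P) + ∫ ω in typeDF D0 D1, f ω ∂P := by
  have hs0 : MeasurableSet {ω | D0 ω = 1} := hD0 (measurableSet_singleton 1)
  have hs1 : MeasurableSet {ω | D1 ω = 1} := hD1 (measurableSet_singleton 1)
  have hA : {ω | D0 ω = 1} ∩ {ω | D1 ω = 1} = typeA D0 D1 := rfl
  have hDF : {ω | D0 ω = 1} \ {ω | D1 ω = 1} = typeDF D0 D1 := by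
    ext ω; rcases hD1b ω with h | h <;> simp [typeDF, h]
  have hC : {ω | D0 ω = 1}ᶜ ∩ {ω | D1 ω = 1} = typeC D0 D1 := by
    ext ω; rcases hD0b ω with h | h <;> simp [typeC, h]
  have hN : {ω | D0 ω = 1}ᶜ \ {ω | D1 ω = 1} = typeN D0 D1 := by
    ext ω; rcases hD0b ω with h | h <;> rcases hD1b ω with h' | h' <;> simp [typeN, h, h']
  have htreated := integral_inter_add_sdiff hs1 (hf.integrableOn (s := {ω | D0 ω = 1}))
  have huntreated := integral_inter_add_sdiff hs1 (hf.integrableOn (s := {ω | D0 ω = 1}ᶜ))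
  rw [hA, hDF] at htreated
  rw [hC, hN] at huntreated
  rw [← integral_add_compl hs0 hf, ← htreated, ← huntreated]
  abel

theorem sum_toReal_measure_types_eq_one [IsProbabilityMeasure P]
    (hD0 : Measurable D0) (hD1 : Measurable D1)
    (hD0b : ∀ ω, D0 ω = 0 ∨ D0 ω = 1) (hD1b : ∀ ω, D1 ω = 0 ∨ D1 ω = 1) :
    (P (typeA D0 D1)).toReal + (P (typeN D0 D1)).toReal + (P (typeC D0 D1)).toReal
      + (P (typeDF D0 D1)).toReal = 1 := by
  simpa [measureReal_def] using
    (integral_eq_sum_setIntegral_types hD0 hD1 hD0b hD1b (integrable_const (μ := P) (1 : ℝ))).symm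

end Types

section ReducedForm

variable {Ω : Type*}

/-- The reduced-form potential outcome `Y_{D_z z}` of an instrument value `z`: the outcome a unit
shows when assigned `z` and left to choose its treatment `d = D_z`, where `y1 = Y_{1z}` and
`y0 = Y_{0z}`. -/
def reducedForm (y1 y0 d : Ω → ℝ) : Ω → ℝ := fun ω => y1 ω * d ω + y0 ω * (1 - d ω)

theorem reducedForm_of_treated {y1 y0 d : Ω → ℝ} {ω : Ω} (hd : d ω = 1) :
    reducedForm y1 y0 d ω = y1 ω := by
  simp [reducedForm, hd]

theorem reducedForm_of_untreated {y1 y0 d : Ω → ℝ} {ω : Ω} (hd : d ω = 0) :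
    reducedForm y1 y0 d ω = y0 ω := by
  simp [reducedForm, hd]

variable [MeasurableSpace Ω] {P : Measure Ω}

theorem integrable_reducedForm {y1 y0 d : Ω → ℝ} (hy1 : Integrable y1 P) (hy0 : Integrable y0 P)
    (hd : AEStronglyMeasurable d P) (hdb : ∀ ω, d ω = 0 ∨ d ω = 1) :
    Integrable (reducedForm y1 y0 d) P := by
  have hd_le : ∀ ω, ‖d ω‖ ≤ 1 := fun ω => by rcases hdb ω with h | h <;> simp [h]
  have hd_compl_le : ∀ ω, ‖1 - d ω‖ ≤ 1 := fun ω => by rcases hdb ω with h | h <;> simp [h]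
  exact (hy1.mul_bdd hd (.of_forall hd_le)).add
    (hy0.mul_bdd (aestronglyMeasurable_const.sub hd) (.of_forall hd_compl_le))

theorem integral_reducedForm_sub_eq_sum_setIntegral_types {Y11 Y10 Y01 Y00 D0 D1 : Ω → ℝ}
    (hD0 : Measurable D0) (hD1 : Measurable D1)
    (hD0b : ∀ ω, D0 ω = 0 ∨ D0 ω = 1) (hD1b : ∀ ω, D1 ω = 0 ∨ D1 ω = 1)
    (hY11 : Integrable Y11 P) (hY10 : Integrable Y10 P)
    (hY01 : Integrable Y01 P) (hY00 : Integrable Y00 P) :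
    (∫ ω, reducedForm Y11 Y01 D1 ω ∂P) - ∫ ω, reducedForm Y10 Y00 D0 ω ∂P
      = (∫ ω in typeA D0 D1, (Y11 ω - Y10 ω) ∂P) + (∫ ω in typeN D0 D1, (Y01 ω - Y00 ω) ∂P)
        + (∫ ω in typeC D0 D1, (Y11 ω - Y00 ω) ∂P)
        + ∫ ω in typeDF D0 D1, (Y01 ω - Y10 ω) ∂P := by
  have hW₁ : Integrable (reducedForm Y11 Y01 D1) P :=
    integrable_reducedForm hY11 hY01 hD1.aestronglyMeasurable hD1b
  have hW₀ : Integrable (reducedForm Y10 Y00 D0) P :=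
    integrable_reducedForm hY10 hY00 hD0.aestronglyMeasurable hD0b
  have hA : ∀ ω ∈ typeA D0 D1, reducedForm Y11 Y01 D1 ω - reducedForm Y10 Y00 D0 ω
      = Y11 ω - Y10 ω := fun ω hω => by
    rw [reducedForm_of_treated hω.1, reducedForm_of_treated hω.2]
  have hN : ∀ ω ∈ typeN D0 D1, reducedForm Y11 Y01 D1 ω - reducedForm Y10 Y00 D0 ω
      = Y01 ω - Y00 ω := fun ω hω => by
    rw [reducedForm_of_untreated hω.1, reducedForm_of_untreated hω.2]
  have hC : ∀ ω ∈ typeC D0 D1, reducedForm Y11 Y01 D1 ω - reducedForm Y10 Y00 D0 ω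
      = Y11 ω - Y00 ω := fun ω hω => by
    rw [reducedForm_of_untreated hω.1, reducedForm_of_treated hω.2]
  have hDF : ∀ ω ∈ typeDF D0 D1, reducedForm Y11 Y01 D1 ω - reducedForm Y10 Y00 D0 ω
      = Y01 ω - Y10 ω := fun ω hω => by
    rw [reducedForm_of_treated hω.1, reducedForm_of_untreated hω.2]
  have hsum := integral_eq_sum_setIntegral_types hD0 hD1 hD0b hD1b (hW₁.sub hW₀)
  simp only [Pi.sub_apply, setIntegral_congr_fun (measurableSet_typeA hD0 hD1) hA,
    setIntegral_congr_fun (measurableSet_typeN hD0 hD1) hN,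
    setIntegral_congr_fun (measurableSet_typeC hD0 hD1) hC,
    setIntegral_congr_fun (measurableSet_typeDF hD0 hD1) hDF] at hsum
  rw [← integral_sub hW₁ hW₀, hsum]

end ReducedForm

theorem itt_decomposition_general
    {Ω ι : Type*} [MeasurableSpace Ω] [MeasurableSpace ι] [MeasurableSingletonClass ι]
    {P : Measure Ω} [IsProbabilityMeasure P] {Y11 Y10 Y01 Y00 D0 D1 Y : Ω → ℝ}
    {Z : Ω → ι} {z₀ z₁ : ι}
    (hD0 : Measurable D0) (hD1 : Measurable D1) (hZ : Measurable Z)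
    (hD0b : ∀ ω, D0 ω = 0 ∨ D0 ω = 1) (hD1b : ∀ ω, D1 ω = 0 ∨ D1 ω = 1)
    (hz₁ : P {ω | Z ω = z₁} ≠ 0) (hz₀ : P {ω | Z ω = z₀} ≠ 0)
    (hY₁ : ∀ ω, Z ω = z₁ → Y ω = reducedForm Y11 Y01 D1 ω)
    (hY₀ : ∀ ω, Z ω = z₀ → Y ω = reducedForm Y10 Y00 D0 ω)
    (hind₁ : IndepFun (reducedForm Y11 Y01 D1) Z P)
    (hind₀ : IndepFun (reducedForm Y10 Y00 D0) Z P)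
    (hY11 : Integrable Y11 P) (hY10 : Integrable Y10 P)
    (hY01 : Integrable Y01 P) (hY00 : Integrable Y00 P) :
    ce P {ω | Z ω = z₁} Y - ce P {ω | Z ω = z₀} Y
      = (∫ ω in typeA D0 D1, (Y11 ω - Y10 ω) ∂P)
        + (∫ ω in typeN D0 D1, (Y01 ω - Y00 ω) ∂P)
        + (∫ ω in typeC D0 D1, (Y11 ω - Y00 ω) ∂P)
        + (∫ ω in typeDF D0 D1, (Y01 ω - Y10 ω) ∂P)
  ∧ ce P {ω | Z ω = z₁} Y - ce P {ω | Z ω = z₀} Y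
      = (P (typeA D0 D1)).toReal * ce P (typeA D0 D1) (fun ω => Y11 ω - Y10 ω)
        + (P (typeN D0 D1)).toReal * ce P (typeN D0 D1) (fun ω => Y01 ω - Y00 ω)
        + (P (typeC D0 D1)).toReal * ce P (typeC D0 D1) (fun ω => Y11 ω - Y00 ω)
        + (P (typeDF D0 D1)).toReal * ce P (typeDF D0 D1) (fun ω => Y01 ω - Y10 ω)
  ∧ (P (typeA D0 D1)).toReal + (P (typeN D0 D1)).toReal + (P (typeC D0 D1)).toReal
      + (P (typeDF D0 D1)).toReal = 1 := by
  have hW₁ := integrable_reducedForm hY11 hY01 hD1.aestronglyMeasurable hD1b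
  have hW₀ := integrable_reducedForm hY10 hY00 hD0.aestronglyMeasurable hD0b
  simp only [toReal_measure_mul_ce, ce_eq_integral_of_indepFun hind₁ hW₁.aemeasurable hZ hz₁ hY₁,
    ce_eq_integral_of_indepFun hind₀ hW₀.aemeasurable hZ hz₀ hY₀]
  have hITT := integral_reducedForm_sub_eq_sum_setIntegral_types
    hD0 hD1 hD0b hD1b hY11 hY10 hY01 hY00
  exact ⟨hITT, hITT, sum_toReal_measure_types_eq_one hD0 hD1 hD0b hD1b⟩

theorem itt_decomposition
    {Ω : Type*} [MeasurableSpace Ω] (P : Measure Ω) [IsProbabilityMeasure P]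
    (Y11 Y10 Y01 Y00 D0 D1 Z D Y : Ω → ℝ)
    (hY11m : Measurable Y11) (hY10m : Measurable Y10)
    (hY01m : Measurable Y01) (hY00m : Measurable Y00)
    (hD0m : Measurable D0) (hD1m : Measurable D1) (hZm : Measurable Z)
    (hD0b : ∀ ω, D0 ω = 0 ∨ D0 ω = 1) (hD1b : ∀ ω, D1 ω = 0 ∨ D1 ω = 1)
    (hZb : ∀ ω, Z ω = 0 ∨ Z ω = 1)
    (hZpos : 0 < P {ω | Z ω = 1}) (hZlt : P {ω | Z ω = 1} < 1)
    (hDdef : ∀ ω, D ω = D1 ω * Z ω + D0 ω * (1 - Z ω))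
    (hYdef : ∀ ω, Y ω = (Y11 ω * Z ω + Y10 ω * (1 - Z ω)) * D ω
        + (Y01 ω * Z ω + Y00 ω * (1 - Z ω)) * (1 - D ω))
    (RA : IndepFun (fun ω => (Y11 ω, Y10 ω, Y01 ω, Y00 ω, D0 ω, D1 ω)) Z P)
    (MON : ∀ᵐ ω ∂P, D0 ω ≤ D1 ω)
    (hY11int : Integrable Y11 P) (hY10int : Integrable Y10 P)
    (hY01int : Integrable Y01 P) (hY00int : Integrable Y00 P) :
    ce P {ω | Z ω = 1} Y - ce P {ω | Z ω = 0} Y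
      = (∫ ω in typeA D0 D1, (Y11 ω - Y10 ω) ∂P)
        + (∫ ω in typeN D0 D1, (Y01 ω - Y00 ω) ∂P)
        + (∫ ω in typeC D0 D1, (Y11 ω - Y00 ω) ∂P)
  ∧ (0 < (P (typeA D0 D1)).toReal → 0 < (P (typeN D0 D1)).toReal →
      0 < (P (typeC D0 D1)).toReal →
      ce P {ω | Z ω = 1} Y - ce P {ω | Z ω = 0} Y
        = (P (typeA D0 D1)).toReal * ce P (typeA D0 D1) (fun ω => Y11 ω - Y10 ω)
          + (P (typeN D0 D1)).toReal * ce P (typeN D0 D1) (fun ω => Y01 ω - Y00 ω)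
          + (P (typeC D0 D1)).toReal * ce P (typeC D0 D1) (fun ω => Y11 ω - Y00 ω)
      ∧ (P (typeA D0 D1)).toReal + (P (typeN D0 D1)).toReal
          + (P (typeC D0 D1)).toReal = 1) := by
  have hind₁ : IndepFun (reducedForm Y11 Y01 D1) Z P :=
    RA.comp (φ := fun v : ℝ × ℝ × ℝ × ℝ × ℝ × ℝ =>
      v.1 * v.2.2.2.2.2 + v.2.2.1 * (1 - v.2.2.2.2.2))
      (ψ := id) (by fun_prop) measurable_id
  have hind₀ : IndepFun (reducedForm Y10 Y00 D0) Z P :=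
    RA.comp (φ := fun v : ℝ × ℝ × ℝ × ℝ × ℝ × ℝ =>
      v.2.1 * v.2.2.2.2.1 + v.2.2.2.1 * (1 - v.2.2.2.2.1))
      (ψ := id) (by fun_prop) measurable_id
  have hDF : P (typeDF D0 D1) = 0 := measure_typeDF_eq_zero MON
  have hY₁ : ∀ ω, Z ω = 1 → Y ω = reducedForm Y11 Y01 D1 ω := fun ω h => by
    simp [reducedForm, hYdef, hDdef, h]
  have hY₀ : ∀ ω, Z ω = 0 → Y ω = reducedForm Y10 Y00 D0 ω := fun ω h => by
    simp [reducedForm, hYdef, hDdef, h]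
  have hgeneral := itt_decomposition_general hD0m hD1m hZm hD0b hD1b hZpos.ne'
    (measure_setOf_eq_zero_ne_zero hZm hZb hZlt) hY₁ hY₀ hind₁ hind₀ hY11int hY10int hY01int hY00int
  simp only [hDF, setIntegral_measure_zero _ hDF, ENNReal.toReal_zero, zero_mul, add_zero]
    at hgeneral
  exact ⟨hgeneral.1, fun _ _ _ => hgeneral.2⟩
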